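/- Let δ, Δ be positive integers with δ ≤ Δ, let G be a finite digraph and let A be a set of exactly δ vertices of G, each of out-degree at most Δ − δ. Then there exists a Sybil attack from A creating exactly δ − 1 fake vertices in which the attackers give in total exactly (δ − 1) + binom(δ,2) certifications: the j-th created fake vertex (for 1 ≤ j ≤ δ − 1) receives certifications from exactly δ − j + 1 attackers and from all j − 1 previously created fake vertices. -/

import Mathlib

/-- A finite directed graph: a finite set of vertices and a finite set of arcs. -/
structure FinDigraph (V : Type*) where
  verts : Finset V
  arcs : Finset (V × V)

variable {V : Type*}

/-- Out-degree of a vertex: number of arcs leaving it. -/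
def FinDigraph.outDeg [DecidableEq V] (G : FinDigraph V) (v : V) : ℕ :=
  (G.arcs.filter (fun a => a.1 = v)).card

/-- In-degree of a vertex: number of arcs entering it. -/
def FinDigraph.inDeg [DecidableEq V] (G : FinDigraph V) (v : V) : ℕ :=
  (G.arcs.filter (fun a => a.2 = v)).card

/-- The number of available certifications of a set `X` of vertices:
`c(X) = |X|·Δ − Σ_{x∈X} d⁺(x)`. -/
def certAvail [DecidableEq V] (Δ : ℕ) (G : FinDigraph V) (X : Finset V) : ℕ :=
  X.card * Δ - ∑ x ∈ X, G.outDeg x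

/-- `reachLE G k u v` : there is a directed path from `u` to `v` of length at most `k`. -/
def reachLE (G : FinDigraph V) : ℕ → V → V → Prop
  | 0, u, v => u = v
  | k + 1, u, v => reachLE G k u v ∨ ∃ w, reachLE G k u w ∧ (w, v) ∈ G.arcs

/-- `distLE G A k v` : the distance from the set `A` to the vertex `v` is at most `k`,
i.e. there is a directed path of length at most `k` from some vertex of `A` to `v`. -/
def distLE (G : FinDigraph V) (A : Finset V) (k : ℕ) (v : V) : Prop :=
  ∃ a ∈ A, reachLE G k a v

/-- A vertex is referent if both its out-degree and its in-degree are at least `n^(1/d)`,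
where `n` is the number of vertices. -/
def isReferent [DecidableEq V] (G : FinDigraph V) (d : ℕ) (v : V) : Prop :=
  (G.verts.card : ℝ) ^ ((d : ℝ)⁻¹) ≤ (G.outDeg v : ℝ) ∧
  (G.verts.card : ℝ) ^ ((d : ℝ)⁻¹) ≤ (G.inDeg v : ℝ)

/-- `r(G)` : the number of referent vertices of `G`. -/
noncomputable def refCount [DecidableEq V] (G : FinDigraph V) (d : ℕ) : ℕ :=
  {v | v ∈ G.verts ∧ isReferent G d v}.ncard

/-- `r_i(X)` : the number of referent vertices at distance at most `i` to the set `X`. -/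
noncomputable def refCountNear [DecidableEq V] (G : FinDigraph V) (d i : ℕ) (X : Finset V) : ℕ :=
  {v | v ∈ G.verts ∧ isReferent G d v ∧ ∃ x ∈ X, reachLE G i v x}.ncard

/-- The digraph obtained by adding a new vertex `v` with arcs from every vertex of `X` to `v`. -/
def addVertex [DecidableEq V] (G : FinDigraph V) (X : Finset V) (v : V) : FinDigraph V :=
  ⟨insert v G.verts, G.arcs ∪ X.image (fun x => (x, v))⟩

/-- The digraph obtained by adding an arc from `u` to `v`. -/
def addArc [DecidableEq V] (G : FinDigraph V) (u v : V) : FinDigraph V :=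
  ⟨G.verts, insert (u, v) G.arcs⟩

/-- One step of a Sybil attack from the attacker set `A`: a state is a pair
`(current graph, set of fake vertices created so far)`. -/
inductive SybilStep [DecidableEq V] (δ Δ : ℕ) (A : Finset V) :
    FinDigraph V × Finset V → FinDigraph V × Finset V → Prop
  | vertexCreation (G : FinDigraph V) (F : Finset V) (X : Finset V) (v : V)
      (hv : v ∉ G.verts) (hXAF : X ⊆ A ∪ F) (hXG : X ⊆ G.verts)
      (hXcard : δ ≤ X.card) (hXdeg : ∀ x ∈ X, G.outDeg x < Δ) :
      SybilStep δ Δ A (G, F) (addVertex G X v, insert v F)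
  | arcCreation (G : FinDigraph V) (F : Finset V) (u v : V)
      (hu : u ∈ A ∪ F) (huG : u ∈ G.verts) (hvG : v ∈ G.verts) (hne : u ≠ v)
      (hdeg : G.outDeg u < Δ) :
      SybilStep δ Δ A (G, F) (addArc G u v, F)

/-- A Sybil attack from `A` on the initial graph `G`, ending in the graph `G'`
with set of fake vertices `F`. -/
def SybilAttack [DecidableEq V] (δ Δ : ℕ) (A : Finset V) (G G' : FinDigraph V)
    (F : Finset V) : Prop :=
  Relation.ReflTransGen (SybilStep δ Δ A) (G, ∅) (G', F)

/-- One step of a *valid* Sybil attack: vertex creations must moreover satisfy the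
distance rule `r_{d-1}(X) ≥ α·r(G)` in the current graph. -/
inductive ValidSybilStep [DecidableEq V] (δ Δ d : ℕ) (α : ℝ) (A : Finset V) :
    FinDigraph V × Finset V → FinDigraph V × Finset V → Prop
  | vertexCreation (G : FinDigraph V) (F : Finset V) (X : Finset V) (v : V)
      (hv : v ∉ G.verts) (hXAF : X ⊆ A ∪ F) (hXG : X ⊆ G.verts)
      (hXcard : δ ≤ X.card) (hXdeg : ∀ x ∈ X, G.outDeg x < Δ)
      (hdist : α * (refCount G d : ℝ) ≤ (refCountNear G d (d - 1) X : ℝ)) :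
      ValidSybilStep δ Δ d α A (G, F) (addVertex G X v, insert v F)
  | arcCreation (G : FinDigraph V) (F : Finset V) (u v : V)
      (hu : u ∈ A ∪ F) (huG : u ∈ G.verts) (hvG : v ∈ G.verts) (hne : u ≠ v)
      (hdeg : G.outDeg u < Δ) :
      ValidSybilStep δ Δ d α A (G, F) (addArc G u v, F)

/-- A valid Sybil attack from `A` on the initial graph `G`, ending in the graph `G'`
with set of fake vertices `F`. -/
def ValidSybilAttack [DecidableEq V] (δ Δ d : ℕ) (α : ℝ) (A : Finset V)
    (G G' : FinDigraph V) (F : Finset V) : Prop :=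
  Relation.ReflTransGen (ValidSybilStep δ Δ d α A) (G, ∅) (G', F)

/-!
Let the `j`-th fake vertex (`j = 0, 1, …, δ - 2`) be certified by `δ - j` attackers and by all `j`
earlier fake vertices, hence by `δ` vertices. A vertex creation raises every out-degree by at most
one, so before the `j`-th creation an attacker has given at most `j ≤ δ - 2` new certifications and
a fake vertex at most `j` in all: everybody still has one left. The attackers give
`δ + (δ - 1) + ⋯ + 2` certifications altogether.
-/

theorem sum_range_pred_sub_eq_add_choose_two (n : ℕ) :
    ∑ j ∈ Finset.range (n - 1), (n - j) = (n - 1) + n.choose 2 := by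
  cases n with
  | zero => rfl
  | succ n =>
    calc ∑ j ∈ Finset.range n, (n + 1 - j)
        = ∑ j ∈ Finset.range n, (1 + (n - j)) :=
          Finset.sum_congr rfl fun j hj => by have := Finset.mem_range.1 hj; omega
      _ = n + ∑ j ∈ Finset.range n, (n - j) := by simp [Finset.sum_add_distrib]
      _ = n + ∑ j ∈ Finset.range (n + 1), (n - j) := by simp [Finset.sum_range_succ]
      _ = n + ∑ j ∈ Finset.range (n + 1), j := by
          rw [← Finset.sum_range_reflect (fun j => j)]; rfl
      _ = n + (n + 1).choose 2 := by rw [Finset.sum_range_id, Nat.choose_two_right]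

theorem card_union_image_range {α : Type*} [DecidableEq α] {v : ℕ → α} (hinj : Function.Injective v)
    {X : Finset α} (hX : ∀ i, v i ∉ X) (n : ℕ) :
    (X ∪ Finset.image v (Finset.range n)).card = X.card + n := by
  have hdisj : Disjoint X (Finset.image v (Finset.range n)) := by
    refine Finset.disjoint_right.2 fun x hx => ?_
    obtain ⟨i, -, rfl⟩ := Finset.mem_image.1 hx
    exact hX i
  rw [Finset.card_union_of_disjoint hdisj, Finset.card_image_of_injective _ hinj,
    Finset.card_range]

section FreshVertices

variable [DecidableEq V]

theorem FinDigraph.outDeg_eq_zero_iff {G : FinDigraph V} {x : V} :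
    G.outDeg x = 0 ↔ x ∉ G.arcs.image Prod.fst := by
  simp only [FinDigraph.outDeg, Finset.card_eq_zero, Finset.filter_eq_empty_iff, Finset.mem_image,
    not_exists, not_and]

theorem FinDigraph.exists_injective_fresh [Infinite V] (G : FinDigraph V) :
    ∃ v : ℕ → V, Function.Injective v ∧ (∀ j, v j ∉ G.verts) ∧ ∀ j, G.outDeg (v j) = 0 := by
  -- An arc of a `FinDigraph` need not join vertices, so tails of arcs have to be avoided as well.
  let S : Finset V := G.verts ∪ G.arcs.image Prod.fst
  let f := S.finite_toSet.infinite_compl.natEmbedding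
  have hf (j : ℕ) : (f j : V) ∉ G.verts ∧ (f j : V) ∉ G.arcs.image Prod.fst := by
    rw [← not_or, ← Finset.mem_union]
    exact (f j).2
  exact ⟨fun j => f j, Subtype.val_injective.comp f.injective, fun j => (hf j).1,
    fun j => outDeg_eq_zero_iff.2 (hf j).2⟩

end FreshVertices

section SuccessiveCreations

variable [DecidableEq V]

theorem outDeg_addVertex_le (G : FinDigraph V) (X : Finset V) (v x : V) :
    (addVertex G X v).outDeg x ≤ G.outDeg x + 1 := by
  have hnew : (X.image fun y => (y, v)).filter (fun a => a.1 = x) ⊆ {(x, v)} := by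
    intro a ha
    obtain ⟨hmem, rfl⟩ := Finset.mem_filter.1 ha
    obtain ⟨y, -, rfl⟩ := Finset.mem_image.1 hmem
    exact Finset.mem_singleton_self _
  rw [FinDigraph.outDeg, addVertex, Finset.filter_union]
  exact (Finset.card_union_le _ _).trans
    (Nat.add_le_add_left (Finset.card_le_card hnew) _)

/-- The graph after `j` successive vertex creations starting from `G`, which create
`v 0, …, v (j - 1)`. The vertex `v i` is certified by the vertices of `B i` and by all vertices
created before it. -/
def creationGraph (G : FinDigraph V) (v : ℕ → V) (B : ℕ → Finset V) : ℕ → FinDigraph V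
  | 0 => G
  | j + 1 => addVertex (creationGraph G v B j) (B j ∪ Finset.image v (Finset.range j)) (v j)

variable (G : FinDigraph V) (v : ℕ → V) (B : ℕ → Finset V)

theorem verts_creationGraph (j : ℕ) :
    (creationGraph G v B j).verts = G.verts ∪ Finset.image v (Finset.range j) := by
  induction j with
  | zero => simp [creationGraph]
  | succ j ih => simp [creationGraph, addVertex, ih, Finset.range_add_one, Finset.image_insert]

theorem outDeg_creationGraph_le (x : V) (j : ℕ) :
    (creationGraph G v B j).outDeg x ≤ G.outDeg x + j := by
  induction j with
  | zero => exact le_rfl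
  | succ j ih => exact (outDeg_addVertex_le _ _ _ x).trans (Nat.succ_le_succ ih)

variable {G v B}

theorem notMem_verts_creationGraph (hinj : Function.Injective v) {j : ℕ} (hfresh : v j ∉ G.verts) :
    v j ∉ (creationGraph G v B j).verts := by
  simp [verts_creationGraph, hfresh, hinj.eq_iff]

theorem sybilStep_creationGraph {δ Δ j : ℕ} {A : Finset V} (hinj : Function.Injective v)
    (hfresh : ∀ i, v i ∉ G.verts) (hBA : B j ⊆ A) (hBG : B j ⊆ G.verts)
    (hcard : δ ≤ (B j).card + j)
    (hdeg : ∀ x ∈ B j ∪ Finset.image v (Finset.range j), G.outDeg x + j < Δ) :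
    SybilStep δ Δ A (creationGraph G v B j, Finset.image v (Finset.range j))
      (creationGraph G v B (j + 1), Finset.image v (Finset.range (j + 1))) := by
  rw [Finset.range_add_one, Finset.image_insert]
  refine .vertexCreation _ _ _ _ (notMem_verts_creationGraph hinj (hfresh j))
    (Finset.union_subset_union_left hBA) ?_ ?_ ?_
  · rw [verts_creationGraph]
    exact Finset.union_subset_union_left hBG
  · rwa [card_union_image_range hinj fun i hi => hfresh i (hBG hi)]
  · exact fun x hx => (outDeg_creationGraph_le G v B x j).trans_lt (hdeg x hx)

end SuccessiveCreations

theorem sybilAttack_of_forall_sybilStep [DecidableEq V] {δ Δ n : ℕ} {A : Finset V}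
    {Gs : ℕ → FinDigraph V} {F : ℕ → Finset V} (hF : F 0 = ∅)
    (hstep : ∀ j < n, SybilStep δ Δ A (Gs j, F j) (Gs (j + 1), F (j + 1))) :
    SybilAttack δ Δ A (Gs 0) (Gs n) (F n) := by
  rw [SybilAttack, ← hF]
  exact (reflTransGen_of_succ_of_le
    (fun i j => SybilStep δ Δ A (Gs i, F i) (Gs j, F j))
    (fun j hj => hstep j hj.2) n.zero_le).lift (fun j => (Gs j, F j)) fun _ _ h => h

theorem sybil_step_one_general [DecidableEq V] [Infinite V] {δ Δ : ℕ}
    {G : FinDigraph V} {A : Finset V} (hA : A ⊆ G.verts) (hAcard : δ ≤ A.card)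
    (hdeg : ∀ a ∈ A, G.outDeg a + (δ - 1) ≤ Δ) :
    ∃ (v : ℕ → V) (B : ℕ → Finset V) (Gs : ℕ → FinDigraph V),
      Gs 0 = G ∧
      (∀ j, j < δ - 1 → v j ∉ (Gs j).verts) ∧
      Function.Injective (fun j : Fin (δ - 1) => v j) ∧
      (∀ j, j < δ - 1 → B j ⊆ A ∧ (B j).card = δ - j) ∧
      (∀ j, j < δ - 1 →
        SybilStep δ Δ A (Gs j, Finset.image v (Finset.range j))
          (Gs (j + 1), Finset.image v (Finset.range (j + 1))) ∧
        Gs (j + 1) = addVertex (Gs j) (B j ∪ Finset.image v (Finset.range j)) (v j)) ∧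
      SybilAttack δ Δ A G (Gs (δ - 1)) (Finset.image v (Finset.range (δ - 1))) ∧
      (∑ j ∈ Finset.range (δ - 1), (B j).card) = (δ - 1) + Nat.choose δ 2 := by
  obtain ⟨v, hinj, hfresh, hzero⟩ := G.exists_injective_fresh
  have hB (j : ℕ) : ∃ B ⊆ A, B.card = δ - j :=
    Finset.exists_subset_card_eq ((Nat.sub_le δ j).trans hAcard)
  choose B hBA hBcard using hB
  have hspare (j : ℕ) (hj : j < δ - 1) :
      ∀ x ∈ B j ∪ Finset.image v (Finset.range j), G.outDeg x + j < Δ := by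
    intro x hx
    rcases Finset.mem_union.1 hx with hattacker | hfake
    · have := hdeg x (hBA j hattacker)
      omega
    · obtain ⟨i, -, rfl⟩ := Finset.mem_image.1 hfake
      obtain ⟨a, ha⟩ : A.Nonempty := Finset.card_pos.1 (by omega)
      have := hdeg a ha
      rw [hzero i]
      omega
  have hstep (j : ℕ) (hj : j < δ - 1) :=
    sybilStep_creationGraph hinj hfresh (hBA j) ((hBA j).trans hA)
      (tsub_le_iff_right.1 (hBcard j).ge) (hspare j hj)
  refine ⟨v, B, creationGraph G v B, rfl, fun j _ => notMem_verts_creationGraph hinj (hfresh j),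
    hinj.comp Fin.val_injective, fun j _ => ⟨hBA j, hBcard j⟩, fun j hj => ⟨hstep j hj, rfl⟩,
    sybilAttack_of_forall_sybilStep (F := fun j => Finset.image v (Finset.range j)) rfl hstep, ?_⟩
  simp only [hBcard, sum_range_pred_sub_eq_add_choose_two]

/-- **Step 1 of the optimal Sybil strategy.** If `A` has exactly `δ` vertices, each of
out-degree at most `Δ − δ`, then there is a Sybil attack from `A` creating exactly `δ − 1`
fake vertices in which the attackers give in total exactly `(δ − 1) + binom(δ,2)`
certifications: the `j`-th created fake vertex receives certifications from exactly
`δ − j + 1` attackers and from all `j − 1` previously created fake vertices.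
(Here the fake vertices are `v 0, …, v (δ-2)`, so the `j`-th one, `1 ≤ j ≤ δ−1`, is
`v (j-1)`: it receives certifications from the `δ - (j-1)` attackers of `B (j-1)` and from
the previous fake vertices `v 0, …, v (j-2)`.) -/
theorem sybil_step_one {V : Type*} [DecidableEq V] [Infinite V]
    (δ Δ : ℕ) (hδ : 0 < δ) (hΔ : 0 < Δ) (hδΔ : δ ≤ Δ)
    (G : FinDigraph V) (A : Finset V) (hA : A ⊆ G.verts) (hAcard : A.card = δ)
    (hdeg : ∀ a ∈ A, G.outDeg a ≤ Δ - δ) :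
    ∃ (v : ℕ → V) (B : ℕ → Finset V) (Gs : ℕ → FinDigraph V),
      Gs 0 = G ∧
      (∀ j, j < δ - 1 → v j ∉ (Gs j).verts) ∧
      Function.Injective (fun j : Fin (δ - 1) => v j) ∧
      (∀ j, j < δ - 1 → B j ⊆ A ∧ (B j).card = δ - j) ∧
      (∀ j, j < δ - 1 →
        SybilStep δ Δ A (Gs j, Finset.image v (Finset.range j))
          (Gs (j + 1), Finset.image v (Finset.range (j + 1))) ∧
        Gs (j + 1) = addVertex (Gs j) (B j ∪ Finset.image v (Finset.range j)) (v j)) ∧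
      SybilAttack δ Δ A G (Gs (δ - 1)) (Finset.image v (Finset.range (δ - 1))) ∧
      (∑ j ∈ Finset.range (δ - 1), (B j).card) = (δ - 1) + Nat.choose δ 2 := by
  refine sybil_step_one_general hA hAcard.ge fun a ha => ?_
  have := hdeg a ha
  omega
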